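/- (Jacobi derivative formula, in the form used in the paper's one-loop boson correlation function.) For every q ∈ ℂ with 0 < |q| < 1, the z-derivative of the reduced Jacobi theta function at z = 1 satisfies F'(1;q) = ((q;q)_∞)³, i.e. ∑_{n∈ℤ} (−1)^n n · q^{n(n+1)/2} = (∏_{n=1}^∞ (1 − qⁿ))³. Equivalently θ₁₁'(1;q) = i·η(q)³, where η(q) = q^{1/24}(q;q)_∞ is the Dedekind eta function. -/

import Mathlib

/-- The reduced Jacobi theta function `F(z;q) = ∑_{n ∈ ℤ} (-1)^n q^{n(n+1)/2} z^n`. -/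
noncomputable def F (q z : ℂ) : ℂ :=
  ∑' n : ℤ, (-1 : ℂ) ^ n * q ^ (n * (n + 1) / 2) * z ^ n

/-!
The formula is the derivative at `z = 1` of the Jacobi triple product
`F(z;q) = (q;q)_∞ (zq;q)_∞ (z⁻¹;q)_∞`: the last factor is `(1 - z⁻¹) (z⁻¹q;q)_∞`, so `F(·;q)` has
a simple zero at `1` whose slope is the value there of the remaining product, `(q;q)_∞³`.

The triple product is the limit `N → ∞` of the `q`-binomial theorem for `(zq^{1-N};q)_{2N}`, in
which the centred Gaussian binomials `[2N, N+n]` tend to `1/(q;q)_∞` and stay bounded.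
Writing `q = e^{2πiτ}` and `z = e^{2πiw}` identifies the series with Mathlib's two-variable theta
function, `F(z;q) = θ₂(w + (1+τ)/2, τ)`, whose known convergence and term-by-term derivative
replace all estimates on the series.
-/

open Filter Topology Finset Function.Periodic

/-- The Gaussian binomial coefficient `[n, k]_q`, defined by the `q`-Pascal rule
`[n+1, k+1] = [n, k] + q^{k+1} [n, k+1]`, so that no division is needed. -/
def gaussBinom {R : Type*} [Semiring R] (q : R) : ℕ → ℕ → R
  | _, 0 => 1
  | 0, _ + 1 => 0
  | n + 1, k + 1 => gaussBinom q n k + q ^ (k + 1) * gaussBinom q n (k + 1)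

/-- The finite `q`-Pochhammer symbol `(a;q)_n = ∏_{i < n} (1 - a qⁱ)`. -/
def qPochhammer {R : Type*} [CommRing R] (a q : R) (n : ℕ) : R :=
  ∏ i ∈ range n, (1 - a * q ^ i)

section GaussBinom

variable {R : Type*}

@[simp]
lemma gaussBinom_zero_right [Semiring R] (q : R) (n : ℕ) : gaussBinom q n 0 = 1 := by
  cases n <;> rfl

lemma gaussBinom_succ_succ [Semiring R] (q : R) (n k : ℕ) :
    gaussBinom q (n + 1) (k + 1) = gaussBinom q n k + q ^ (k + 1) * gaussBinom q n (k + 1) :=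
  rfl

lemma gaussBinom_eq_zero_of_lt [Semiring R] (q : R) {n k : ℕ} (h : n < k) :
    gaussBinom q n k = 0 := by
  induction n generalizing k with
  | zero => obtain ⟨k, rfl⟩ := Nat.exists_eq_add_one.2 h; rfl
  | succ n ih =>
    obtain ⟨k, rfl⟩ := Nat.exists_eq_add_one.2 (Nat.zero_lt_of_lt h)
    rw [gaussBinom_succ_succ, ih (by lia), ih (by lia), mul_zero, add_zero]

variable [CommRing R] (a q : R)

@[simp]
lemma qPochhammer_zero : qPochhammer a q 0 = 1 :=
  prod_range_zero _

lemma qPochhammer_succ (n : ℕ) :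
    qPochhammer a q (n + 1) = qPochhammer a q n * (1 - a * q ^ n) :=
  prod_range_succ _ n

lemma qPochhammer_add (m n : ℕ) :
    qPochhammer a q (m + n) = qPochhammer a q m * qPochhammer (a * q ^ m) q n := by
  simp only [qPochhammer, prod_range_add, pow_add, mul_assoc]

lemma qPochhammer_succ' (n : ℕ) :
    qPochhammer a q (n + 1) = (1 - a) * qPochhammer (a * q) q n := by
  rw [add_comm, qPochhammer_add]
  simp [qPochhammer]

theorem qPochhammer_eq_sum_gaussBinom (n : ℕ) :
    qPochhammer a q n =
      ∑ k ∈ range (n + 1), gaussBinom q n k * ((-1) ^ k * q ^ k.choose 2 * a ^ k) := by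
  induction n generalizing a with
  | zero => simp
  | succ n ih =>
    set t : ℕ → R := fun k ↦ gaussBinom q n k * ((-1) ^ k * q ^ k.choose 2 * (a * q) ^ k)
    have t_top : t (n + 1) = 0 := by simp [t, gaussBinom_eq_zero_of_lt q n.lt_succ_self]
    have term_succ (k : ℕ) : gaussBinom q (n + 1) (k + 1) *
        ((-1) ^ (k + 1) * q ^ (k + 1).choose 2 * a ^ (k + 1)) = t (k + 1) - a * t k := by
      simp only [t, gaussBinom_succ_succ, Nat.choose_succ_succ' k 1, Nat.choose_one_right]
      ring
    calc qPochhammer a q (n + 1)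
        = ∑ k ∈ range (n + 1), t k - a * ∑ k ∈ range (n + 1), t k := by
          rw [qPochhammer_succ', ih, sub_mul, one_mul]
      _ = ∑ k ∈ range (n + 1), (t (k + 1) - a * t k) + t 0 := by
          rw [sum_sub_distrib, ← mul_sum, sub_add_eq_add_sub, ← sum_range_succ',
            sum_range_succ _ (n + 1), t_top, add_zero]
      _ = _ := by
          rw [sum_range_succ' _ (n + 1), sum_congr rfl fun k _ ↦ term_succ k]
          simp [t]

theorem gaussBinom_mul_qPochhammer (m k : ℕ) :
    gaussBinom q (m + k) k * (qPochhammer q q m * qPochhammer q q k) = qPochhammer q q (m + k) := by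
  induction k generalizing m with
  | zero => simp
  | succ k ihk =>
    induction m with
    | zero =>
      have diagonal := ihk 0
      simp only [zero_add, qPochhammer_zero, one_mul] at diagonal ⊢
      rw [gaussBinom_succ_succ, gaussBinom_eq_zero_of_lt q k.lt_succ_self, mul_zero, add_zero,
        qPochhammer_succ, ← mul_assoc, diagonal]
    | succ m ihm =>
      have left := ihk (m + 1)
      rw [show m + 1 + k = m + (k + 1) by ring] at left
      have succ_m := qPochhammer_succ q q m
      have succ_k := qPochhammer_succ q q k
      rw [show m + 1 + (k + 1) = m + (k + 1) + 1 by ring, gaussBinom_succ_succ,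
        qPochhammer_succ _ _ (m + (k + 1))]
      linear_combination (1 - q * q ^ k) * left + q ^ (k + 1) * (1 - q * q ^ m) * ihm
        + gaussBinom q (m + (k + 1)) k * qPochhammer q q (m + 1) * succ_k
        + q ^ (k + 1) * gaussBinom q (m + (k + 1)) (k + 1) * qPochhammer q q (k + 1) * succ_m

end GaussBinom

section FiniteTripleProduct

variable {K : Type*} [Field K]

/-- The term `(-1)^n q^{n(n+1)/2} z^n` of the reduced theta series; the integer division in the
exponent is exact. -/
def thetaTerm (q z : K) (n : ℤ) : K :=
  (-1) ^ n * q ^ (n * (n + 1) / 2) * z ^ n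

lemma qPochhammer_mul_zpow_one_sub {a q : K} (ha : a ≠ 0) (hq : q ≠ 0) (n : ℕ) :
    qPochhammer (a * q ^ (1 - n : ℤ)) q n * q ^ n.choose 2 = (-a) ^ n * qPochhammer a⁻¹ q n := by
  induction n with
  | zero => simp
  | succ n ih =>
    have shift : a * q ^ (1 - (n + 1 : ℕ) : ℤ) * q = a * q ^ (1 - n : ℤ) := by
      rw [mul_assoc, ← zpow_add_one₀ hq]
      push_cast
      ring_nf
    have first : a * q ^ (1 - (n + 1 : ℕ) : ℤ) * q ^ n = a := by
      rw [mul_assoc, ← zpow_natCast q n, ← zpow_add₀ hq]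
      simp
    rw [qPochhammer_succ', shift, qPochhammer_succ a⁻¹, Nat.choose_succ_succ' n 1,
      Nat.choose_one_right, pow_add, pow_succ (-a)]
    linear_combination (q ^ n - a) * ih
      - qPochhammer (a * q ^ (1 - n : ℤ)) q n * q ^ n.choose 2 * first
      - (-a) ^ n * qPochhammer a⁻¹ q n * q ^ n * mul_inv_cancel₀ ha

lemma sub_mul_sub_add_one_ediv_two (j n : ℕ) :
    ((j : ℤ) - n) * (j - n + 1) / 2 = j.choose 2 + j * (1 - n) + n.choose 2 := by
  have two_mul_choose (m : ℕ) : 2 * (m.choose 2 : ℤ) = m * (m - 1) := by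
    induction m with
    | zero => simp
    | succ m ih =>
      rw [Nat.choose_succ_succ' m 1, Nat.choose_one_right]
      push_cast
      linear_combination ih
  refine Int.ediv_eq_of_eq_mul_left two_ne_zero ?_
  linear_combination -two_mul_choose j - two_mul_choose n

lemma thetaTerm_natCast_sub {q z : K} (hq : q ≠ 0) (hz : z ≠ 0) (j n : ℕ) :
    (-z) ^ n * thetaTerm q z (j - n) =
      (-1) ^ j * q ^ j.choose 2 * (z * q ^ (1 - n : ℤ)) ^ j * q ^ n.choose 2 := by
  have neg_one_ne : (-1 : K) ≠ 0 := neg_ne_zero.2 one_ne_zero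
  rw [thetaTerm, sub_mul_sub_add_one_ediv_two, zpow_sub₀ neg_one_ne, zpow_sub₀ hz,
    zpow_add₀ hq, zpow_add₀ hq, mul_comm (j : ℤ), zpow_mul, neg_pow z, mul_pow]
  simp only [zpow_natCast]
  field_simp

theorem qPochhammer_mul_qPochhammer_inv_eq_sum {q z : K} (hq : q ≠ 0) (hz : z ≠ 0) (N : ℕ) :
    qPochhammer (z * q) q N * qPochhammer z⁻¹ q N =
      ∑ n ∈ Icc (-N : ℤ) N, gaussBinom q (2 * N) (N + n).toNat * thetaTerm q z n := by
  have upper_half : z * q ^ (1 - N : ℤ) * q ^ N = z * q := by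
    rw [mul_assoc, ← zpow_natCast q N, ← zpow_add₀ hq]
    simp
  have reindex : ∑ n ∈ Icc (-N : ℤ) N, gaussBinom q (2 * N) (N + n).toNat * thetaTerm q z n =
      ∑ j ∈ range (2 * N + 1), gaussBinom q (2 * N) j * thetaTerm q z (j - N) :=
    sum_nbij' (fun n ↦ (N + n).toNat) (fun j ↦ (j : ℤ) - N)
      (by grind) (by grind) (by grind) (by grind)
      fun n hn ↦ by
        have := (mem_Icc.1 hn).1
        congr 2
        lia
  refine mul_left_cancel₀ (pow_ne_zero N (neg_ne_zero.2 hz)) ?_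
  calc (-z) ^ N * (qPochhammer (z * q) q N * qPochhammer z⁻¹ q N)
      = qPochhammer (z * q ^ (1 - N : ℤ)) q (2 * N) * q ^ N.choose 2 := by
        rw [two_mul, qPochhammer_add, upper_half]
        linear_combination -qPochhammer (z * q) q N * qPochhammer_mul_zpow_one_sub hz hq N
    _ = (-z) ^ N * ∑ j ∈ range (2 * N + 1), gaussBinom q (2 * N) j * thetaTerm q z (j - N) := by
        rw [qPochhammer_eq_sum_gaussBinom, sum_mul, mul_sum]
        refine sum_congr rfl fun j _ ↦ ?_
        linear_combination -gaussBinom q (2 * N) j * thetaTerm_natCast_sub hq hz j N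
    _ = _ := by rw [reindex]

end FiniteTripleProduct

section JacobiTheta

open Complex Real

lemma thetaTerm_qParam (τ w : ℂ) (n : ℤ) :
    thetaTerm (qParam 1 τ) (qParam 1 w) n = jacobiTheta₂_term n (w + (1 + τ) / 2) τ := by
  have exponent : ((n * (n + 1) / 2 : ℤ) : ℂ) = n * (n + 1) / 2 := by
    rw [Int.cast_div (Int.even_mul_succ_self n).two_dvd (by norm_num)]
    push_cast
    rfl
  rw [thetaTerm, jacobiTheta₂_term, ← exp_pi_mul_I]
  simp only [qParam, ← exp_int_mul, ← Complex.exp_add, exponent]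
  congr 1
  push_cast
  ring

lemma F_qParam (τ w : ℂ) : F (qParam 1 τ) (qParam 1 w) = jacobiTheta₂ (w + (1 + τ) / 2) τ :=
  tsum_congr (thetaTerm_qParam τ w)

lemma hasDerivAt_qParam (h : ℝ) (w : ℂ) :
    HasDerivAt (qParam h) (qParam h w * (2 * π * I / h)) w := by
  simpa only [mul_one] using! (((hasDerivAt_id w).const_mul (2 * π * I)).div_const (h : ℂ)).cexp

lemma exists_qParam_eq_of_norm_lt_one {q : ℂ} (hq₀ : q ≠ 0) (hq : ‖q‖ < 1) :
    ∃ τ : ℂ, 0 < τ.im ∧ qParam 1 τ = q :=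
  ⟨_, im_invQParam_pos_of_norm_lt_one one_pos hq hq₀, qParam_right_inv one_ne_zero hq₀⟩

lemma summable_norm_thetaTerm {𝕜 : Type*} [NormedField 𝕜] {q z : 𝕜} (hq₀ : q ≠ 0)
    (hq : ‖q‖ < 1) (hz : z ≠ 0) : Summable fun n ↦ ‖thetaTerm q z n‖ := by
  obtain ⟨τ, hτ, hqτ⟩ := exists_qParam_eq_of_norm_lt_one (q := ‖q‖) (by simpa) (by simpa)
  have hzw : qParam 1 (invQParam 1 ‖z‖) = ‖z‖ := qParam_right_inv one_ne_zero (by simpa)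
  -- The norms of the terms only involve `‖q‖` and `‖z‖`, so it suffices to sum over `ℂ`.
  have : Summable (thetaTerm (‖q‖ : ℂ) ‖z‖) := by
    rw [← hqτ, ← hzw, funext (thetaTerm_qParam τ _)]
    exact (summable_jacobiTheta₂_term_iff _ _).2 hτ
  simpa [thetaTerm] using this.norm

end JacobiTheta

section InfiniteProduct

/-- The infinite `q`-Pochhammer symbol `(a;q)_∞ = ∏_{n ≥ 0} (1 - a qⁿ)`. -/
noncomputable def qPochhammerInf {R : Type*} [CommRing R] [TopologicalSpace R] (a q : R) : R :=
  ∏' n : ℕ, (1 - a * q ^ n)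

variable {𝕜 : Type*} [NormedField 𝕜] {q : 𝕜}

lemma summable_norm_neg_mul_pow (a : 𝕜) (hq : ‖q‖ < 1) : Summable fun n : ℕ ↦ ‖-(a * q ^ n)‖ := by
  simpa using (summable_geometric_of_lt_one (norm_nonneg q) hq).mul_left ‖a‖

lemma one_sub_self_mul_pow_ne_zero (hq : ‖q‖ < 1) (n : ℕ) : 1 - q * q ^ n ≠ 0 := by
  rw [← pow_succ', sub_ne_zero]
  intro h
  have := pow_lt_one₀ (norm_nonneg q) hq n.succ_ne_zero
  simp [← norm_pow, ← h] at this

lemma qPochhammer_self_ne_zero (hq : ‖q‖ < 1) (n : ℕ) : qPochhammer q q n ≠ 0 :=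
  prod_ne_zero_iff.2 fun i _ ↦ one_sub_self_mul_pow_ne_zero hq i

lemma gaussBinom_eq_div (hq : ‖q‖ < 1) (m k : ℕ) :
    gaussBinom q (m + k) k =
      qPochhammer q q (m + k) / (qPochhammer q q m * qPochhammer q q k) :=
  eq_div_of_mul_eq
    (mul_ne_zero (qPochhammer_self_ne_zero hq m) (qPochhammer_self_ne_zero hq k))
    (gaussBinom_mul_qPochhammer q m k)

variable [CompleteSpace 𝕜]

lemma multipliable_one_sub_mul_pow (a : 𝕜) (hq : ‖q‖ < 1) :
    Multipliable fun n : ℕ ↦ 1 - a * q ^ n := by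
  simpa only [sub_eq_add_neg] using
    multipliable_one_add_of_summable (summable_norm_neg_mul_pow a hq)

lemma tendsto_qPochhammer (a : 𝕜) (hq : ‖q‖ < 1) :
    Tendsto (qPochhammer a q) atTop (𝓝 (qPochhammerInf a q)) :=
  (multipliable_one_sub_mul_pow a hq).tendsto_prod_tprod_nat

lemma qPochhammerInf_eq_one_sub_mul (a : 𝕜) (hq : ‖q‖ < 1) :
    qPochhammerInf a q = (1 - a) * qPochhammerInf (a * q) q := by
  refine tendsto_nhds_unique ((tendsto_qPochhammer a hq).comp (tendsto_add_atTop_nat 1)) ?_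
  exact ((tendsto_qPochhammer (a * q) hq).const_mul (1 - a)).congr
    fun n ↦ (qPochhammer_succ' a q n).symm

lemma qPochhammerInf_self_ne_zero (hq : ‖q‖ < 1) : qPochhammerInf q q ≠ 0 := by
  simpa only [qPochhammerInf, sub_eq_add_neg] using tprod_one_add_ne_zero_of_summable
    (fun n ↦ by simpa only [← sub_eq_add_neg] using one_sub_self_mul_pow_ne_zero hq n)
    (summable_norm_neg_mul_pow q hq)

lemma exists_norm_gaussBinom_le (hq : ‖q‖ < 1) : ∃ C, ∀ n k, ‖gaussBinom q n k‖ ≤ C := by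
  have lim := tendsto_qPochhammer q hq
  obtain ⟨A, hA⟩ := (Metric.isBounded_range_of_tendsto _ lim).exists_norm_le
  obtain ⟨B, hB⟩ := (Metric.isBounded_range_of_tendsto _
    (lim.inv₀ (qPochhammerInf_self_ne_zero hq))).exists_norm_le
  rw [Set.forall_mem_range] at hA hB
  have hA₀ : 0 ≤ A := (norm_nonneg _).trans (hA 0)
  have hB₀ : 0 ≤ B := (norm_nonneg _).trans (hB 0)
  refine ⟨A * (B * B), fun n k ↦ ?_⟩
  rcases lt_or_ge n k with h | h
  · rw [gaussBinom_eq_zero_of_lt q h, norm_zero]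
    positivity
  · obtain ⟨m, rfl⟩ := Nat.exists_eq_add_of_le' h
    rw [gaussBinom_eq_div hq, div_eq_mul_inv, mul_inv, norm_mul, norm_mul]
    gcongr <;> apply_rules

lemma tendsto_gaussBinom_add {ι : Type*} {l : Filter ι} {m k : ι → ℕ} (hq : ‖q‖ < 1)
    (hm : Tendsto m l atTop) (hk : Tendsto k l atTop) :
    Tendsto (fun i ↦ gaussBinom q (m i + k i) (k i)) l (𝓝 (qPochhammerInf q q)⁻¹) := by
  have lim := tendsto_qPochhammer q hq
  have ne := qPochhammerInf_self_ne_zero hq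
  have quotient_lim := (lim.comp (hm.atTop_add_atTop hk)).div
    ((lim.comp hm).mul (lim.comp hk)) (mul_ne_zero ne ne)
  rw [div_mul_cancel_left₀ ne] at quotient_lim
  exact quotient_lim.congr fun i ↦ (gaussBinom_eq_div hq (m i) (k i)).symm

lemma tendsto_gaussBinom_two_mul (hq : ‖q‖ < 1) (n : ℤ) :
    Tendsto (fun N : ℕ ↦ gaussBinom q (2 * N) (N + n).toNat) atTop
      (𝓝 (qPochhammerInf q q)⁻¹) := by
  have toNat_atTop (c : ℤ) : Tendsto (fun N : ℕ ↦ (N + c).toNat) atTop atTop :=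
    tendsto_atTop.2 fun b ↦ by
      filter_upwards [eventually_ge_atTop (b + c.natAbs)] with N hN
      lia
  refine (tendsto_gaussBinom_add hq (toNat_atTop (-n)) (toNat_atTop n)).congr' ?_
  filter_upwards [eventually_ge_atTop n.natAbs] with N hN
  congr 1
  lia

theorem hasSum_thetaTerm {z : 𝕜} (hq₀ : q ≠ 0) (hq : ‖q‖ < 1) (hz : z ≠ 0) :
    HasSum (thetaTerm q z)
      (qPochhammerInf q q * (qPochhammerInf (z * q) q * qPochhammerInf z⁻¹ q)) := by
  obtain ⟨C, hC⟩ := exists_norm_gaussBinom_le hq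
  have summable := summable_norm_thetaTerm hq₀ hq hz
  set a : ℕ → ℤ → 𝕜 := fun N ↦ Set.indicator (Icc (-N : ℤ) N)
    fun n ↦ gaussBinom q (2 * N) (N + n).toNat * thetaTerm q z n
  have a_tendsto (n : ℤ) :
      Tendsto (a · n) atTop (𝓝 ((qPochhammerInf q q)⁻¹ * thetaTerm q z n)) := by
    refine ((tendsto_gaussBinom_two_mul hq n).mul_const _).congr' ?_
    filter_upwards [eventually_ge_atTop n.natAbs] with N hN
    have mem : n ∈ Icc (-N : ℤ) N := mem_Icc.2 (by lia)
    simp only [a, Set.indicator_of_mem (mem_coe.2 mem)]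
  have a_bound (N : ℕ) (n : ℤ) : ‖a N n‖ ≤ C * ‖thetaTerm q z n‖ := by
    refine (norm_indicator_le_norm_self _ _).trans ?_
    rw [norm_mul]
    gcongr
    exact hC _ _
  have series_lim := tendsto_tsum_of_dominated_convergence (summable.mul_left C) a_tendsto
    (Eventually.of_forall a_bound)
  have product_lim := (tendsto_qPochhammer (z * q) hq).mul (tendsto_qPochhammer z⁻¹ hq)
  have a_sum (N : ℕ) : ∑' n, a N n = qPochhammer (z * q) q N * qPochhammer z⁻¹ q N := by
    rw [qPochhammer_mul_qPochhammer_inv_eq_sum hq₀ hz, sum_eq_tsum_indicator]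
  have triple := tendsto_nhds_unique (series_lim.congr a_sum) product_lim
  rw [tsum_mul_left, inv_mul_eq_iff_eq_mul₀ (qPochhammerInf_self_ne_zero hq)] at triple
  exact triple ▸ summable.of_norm.hasSum

end InfiniteProduct

section Derivative

open Complex Real

variable {q : ℂ}

lemma differentiable_qPochhammerInf (hq : ‖q‖ < 1) :
    Differentiable ℂ fun a ↦ qPochhammerInf a q := by
  have prod_lim : HasProdLocallyUniformlyOn (fun n a ↦ 1 - a * q ^ n)
      (fun a ↦ qPochhammerInf a q) Set.univ := by
    simp_rw [qPochhammerInf, sub_eq_add_neg]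
    refine hasProdLocallyUniformlyOn_of_forall_compact isOpen_univ fun K _ hK ↦ ?_
    obtain ⟨R, hR⟩ := hK.isBounded.exists_norm_le
    refine ((summable_geometric_of_lt_one (norm_nonneg q) hq).mul_left
      R).hasProdUniformlyOn_nat_one_add hK (.of_forall fun n a ha ↦ ?_) fun n ↦ by fun_prop
    rw [norm_neg, norm_mul, norm_pow]
    gcongr
    exact hR a ha
  rw [← differentiableOn_univ]
  exact prod_lim.differentiableOn (.of_forall fun s ↦ by
    simpa [prod_fn] using DifferentiableOn.finsetProd fun _ _ ↦ by fun_prop) isOpen_univ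

theorem F_eq_qPochhammerInf {z : ℂ} (hq₀ : q ≠ 0) (hq : ‖q‖ < 1) (hz : z ≠ 0) :
    F q z = qPochhammerInf q q * (qPochhammerInf (z * q) q * qPochhammerInf z⁻¹ q) :=
  (hasSum_thetaTerm hq₀ hq hz).tsum_eq

lemma differentiableAt_F {z : ℂ} (hq₀ : q ≠ 0) (hq : ‖q‖ < 1) (hz : z ≠ 0) :
    DifferentiableAt ℂ (F q) z := by
  have F_eq : F q =ᶠ[𝓝 z] fun w ↦
      qPochhammerInf q q * (qPochhammerInf (w * q) q * qPochhammerInf w⁻¹ q) := by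
    filter_upwards [eventually_ne_nhds hz] with w hw using F_eq_qPochhammerInf hq₀ hq hw
  have := differentiable_qPochhammerInf hq
  refine DifferentiableAt.congr_of_eventuallyEq ?_ F_eq
  fun_prop (disch := exact hz)

theorem hasDerivAt_F_one (hq₀ : q ≠ 0) (hq : ‖q‖ < 1) :
    HasDerivAt (F q) (qPochhammerInf q q ^ 3) 1 := by
  set G : ℂ → ℂ := fun z ↦
    qPochhammerInf q q * (qPochhammerInf (z * q) q * qPochhammerInf (z⁻¹ * q) q)
  have F_eq : F q =ᶠ[𝓝 1] fun z ↦ (1 - z⁻¹) * G z := by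
    filter_upwards [eventually_ne_nhds one_ne_zero] with z hz
    rw [F_eq_qPochhammerInf hq₀ hq hz, qPochhammerInf_eq_one_sub_mul z⁻¹ hq]
    ring
  have G_diff : DifferentiableAt ℂ G 1 := by
    have := differentiable_qPochhammerInf hq
    fun_prop (disch := norm_num)
  have factor : HasDerivAt (fun z : ℂ ↦ 1 - z⁻¹) 1 1 := by
    simpa using (hasDerivAt_inv (one_ne_zero (α := ℂ))).const_sub 1
  have slope : 1 * G 1 + (1 - 1⁻¹) * deriv G 1 = qPochhammerInf q q ^ 3 := by
    simp only [G, inv_one, one_mul, sub_self, zero_mul, add_zero]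
    ring
  exact slope ▸ (factor.mul G_diff.hasDerivAt).congr_of_eventuallyEq F_eq

theorem hasSum_intCast_mul_thetaTerm {z : ℂ} (hq₀ : q ≠ 0) (hq : ‖q‖ < 1) (hz : z ≠ 0) :
    HasSum (fun n : ℤ ↦ n * thetaTerm q z n) (z * deriv (F q) z) := by
  obtain ⟨τ, hτ, rfl⟩ := exists_qParam_eq_of_norm_lt_one hq₀ hq
  obtain ⟨w, rfl⟩ : ∃ w, qParam 1 w = z := ⟨_, qParam_right_inv one_ne_zero hz⟩
  have chain_rule : HasDerivAt (fun v ↦ jacobiTheta₂ (v + (1 + τ) / 2) τ)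
      (deriv (F (qParam 1 τ)) (qParam 1 w) * (qParam 1 w * (2 * π * I))) w := by
    simp_rw [← F_qParam]
    simpa using! (differentiableAt_F hq₀ hq hz).hasDerivAt.comp w (hasDerivAt_qParam 1 w)
  have deriv_eq := chain_rule.unique
    ((hasDerivAt_jacobiTheta₂_fst (w + (1 + τ) / 2) hτ).comp_add_const _ _)
  have term_eq (n : ℤ) : jacobiTheta₂'_term n (w + (1 + τ) / 2) τ / (2 * π * I) =
      n * thetaTerm (qParam 1 τ) (qParam 1 w) n := by
    rw [thetaTerm_qParam, jacobiTheta₂'_term, mul_assoc, mul_div_cancel_left₀ _ two_pi_I_ne_zero]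
  have sum_eq : jacobiTheta₂' (w + (1 + τ) / 2) τ / (2 * π * I) =
      qParam 1 w * deriv (F (qParam 1 τ)) (qParam 1 w) := by
    rw [← deriv_eq, ← mul_assoc, mul_div_cancel_right₀ _ two_pi_I_ne_zero, mul_comm]
  have series := (hasSum_jacobiTheta₂'_term (w + (1 + τ) / 2) hτ).div_const (2 * π * I)
  rwa [funext term_eq, sum_eq] at series

end Derivative

/-- Jacobi derivative formula: `F'(1;q) = ((q;q)_∞)³`, i.e.
`∑_{n∈ℤ} (-1)^n n q^{n(n+1)/2} = (∏_{n≥1}(1-qⁿ))³`. -/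
theorem stmt4 (q : ℂ) (hq0 : 0 < ‖q‖) (hq1 : ‖q‖ < 1) :
    deriv (F q) 1 = (∏' n : ℕ, (1 - q ^ (n + 1))) ^ 3 ∧
    ∑' n : ℤ, (-1 : ℂ) ^ n * (n : ℂ) * q ^ (n * (n + 1) / 2)
      = (∏' n : ℕ, (1 - q ^ (n + 1))) ^ 3 := by
  have hq₀ : q ≠ 0 := norm_pos_iff.1 hq0
  have deriv_eq : deriv (F q) 1 = (∏' n : ℕ, (1 - q ^ (n + 1))) ^ 3 := by
    simpa only [qPochhammerInf, ← pow_succ'] using (hasDerivAt_F_one hq₀ hq1).deriv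
  refine ⟨deriv_eq, ?_⟩
  have series := (hasSum_intCast_mul_thetaTerm hq₀ hq1 one_ne_zero).tsum_eq
  rw [one_mul, deriv_eq] at series
  rw [← series]
  refine tsum_congr fun n ↦ ?_
  rw [thetaTerm, one_zpow, mul_one]
  ring
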